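/- Let d ≥ 1, let p₀, …, p_d ∈ ℝ^d be affinely independent points, let T be their convex hull, and let v : ℝ^d → ℝ be an affine function. Then (vol(T)/((d+1)(d+2))) Σ_{i=0}^{d} v(pᵢ)² ≤ ∫_T v(x)² dx ≤ (vol(T)/(d+1)) Σ_{i=0}^{d} v(pᵢ)², where vol(T) denotes the Lebesgue measure of T. -/

import Mathlib

open MeasureTheory

set_option linter.unusedSectionVars false

section MassLumping

variable {E : Type*} [NormedAddCommGroup E] [NormedSpace ℝ E] [FiniteDimensional ℝ E]
  [MeasurableSpace E] [BorelSpace E] {ι : Type*} [Fintype ι] [DecidableEq ι]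

/-- Change of variables for the affine map `x ↦ x + f x • u`. -/
lemma ml_change (μ : Measure E) [μ.IsAddHaarMeasure] (f : E →ᵃ[ℝ] ℝ) (u : E) (c : ℝ)
    (hc : f.linear u = c) (hc1 : 1 + c ≠ 0) (S : Set E) (hS : MeasurableSet S) (q : E → ℝ) :
    ∫ x in (fun x => x + f x • u) '' S, q x ∂μ
      = |1 + c| * ∫ x in S, q (x + f x • u) ∂μ := by
  have hdet : (LinearMap.toContinuousLinearMap (LinearMap.transvection f.linear u)).det
      = 1 + c := by
    rw [LinearMap.det_toContinuousLinearMap, LinearMap.transvection.det, hc]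
  have hlin : ∀ x y, f x - f y = f.linear (x - y) := by
    intro x y
    have := f.linearMap_vsub x y
    simpa using this.symm
  rw [integral_image_eq_integral_abs_det_fderiv_smul μ hS
    (f' := fun _ => LinearMap.toContinuousLinearMap (LinearMap.transvection f.linear u))]
  · simp only [hdet, smul_eq_mul]
    rw [integral_const_mul]
  · intro x _
    have h : (fun x => x + f x • u) = fun x =>
        LinearMap.toContinuousLinearMap (LinearMap.transvection f.linear u) x + f 0 • u := by
      funext x
      have := hlin x 0
      have h2 : f x = f.linear x + f 0 := by rw [sub_zero] at this; linarith
      simp [LinearMap.transvection, h2, add_smul, add_assoc]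
    rw [h]
    exact ((ContinuousLinearMap.hasFDerivAt _).add_const _).hasFDerivWithinAt
  · intro x _ y _ hxy
    simp only at hxy
    have h1 : x - y = (f y - f x) • u := by
      rw [sub_smul, sub_eq_sub_iff_add_eq_add, hxy, add_comm]
    have h2 : f x - f y = (f y - f x) * c := by
      rw [hlin, h1, map_smul, hc, smul_eq_mul]
    have h3 : (f x - f y) * (1 + c) = 0 := by linarith
    have h4 : f x - f y = 0 := (mul_eq_zero.mp h3).resolve_right hc1
    have h5 : f y - f x = 0 := by linarith
    rw [h5, zero_smul] at h1
    exact sub_eq_zero.mp h1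

lemma ml_coord_move (b : AffineBasis ι ℝ E) (k i j : ι) (x : E) (t : ℝ) :
    b.coord k (x + t • (b i - b j)) = b.coord k x
      + t * ((if k = i then 1 else 0) - (if k = j then 1 else 0)) := by
  have h1 : b.coord k (x + t • (b i - b j)) = (b.coord k).linear (t • (b i - b j))
      + b.coord k x := by
    have := (b.coord k).map_vadd x (t • (b i - b j))
    simpa [add_comm] using this
  have h2 : (b.coord k).linear (b i - b j) = b.coord k (b i) - b.coord k (b j) := by
    simpa using (b.coord k).linearMap_vsub (b i) (b j)
  rw [h1, map_smul, h2, b.coord_apply, b.coord_apply, smul_eq_mul]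
  ring

lemma ml_coord_linear (b : AffineBasis ι ℝ E) (k i j : ι) :
    (b.coord k).linear (b i - b j) = (if k = i then 1 else 0) - (if k = j then 1 else 0) := by
  have h2 : (b.coord k).linear (b i - b j) = b.coord k (b i) - b.coord k (b j) := by
    simpa using (b.coord k).linearMap_vsub (b i) (b j)
  rw [h2, b.coord_apply, b.coord_apply]

lemma ml_cont (b : AffineBasis ι ℝ E) (k : ι) : Continuous (b.coord k) :=
  (b.coord k).continuous_of_finiteDimensional

lemma ml_mem (b : AffineBasis ι ℝ E) (x : E) :
    x ∈ convexHull ℝ (Set.range b) ↔ ∀ k, 0 ≤ b.coord k x := by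
  rw [b.convexHull_eq_nonneg_coord]; rfl

lemma ml_compact (b : AffineBasis ι ℝ E) : IsCompact (convexHull ℝ (Set.range b)) :=
  (Set.finite_range b).isCompact_convexHull ℝ

/-- Symmetry of integrals over the simplex under transposition of two vertices. -/
lemma ml_swap (μ : Measure E) [μ.IsAddHaarMeasure] (b : AffineBasis ι ℝ E) (i j : ι)
    (hij : i ≠ j) (F : (ι → ℝ) → ℝ) :
    ∫ x in convexHull ℝ (Set.range b), F (fun k => b.coord k x) ∂μ =
    ∫ x in convexHull ℝ (Set.range b), F (fun k => b.coord (Equiv.swap i j k) x) ∂μ := by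
  set T := convexHull ℝ (Set.range b) with hT
  have key : ∀ x k, b.coord k (x + (b.coord j - b.coord i) x • (b i - b j))
      = b.coord (Equiv.swap i j k) x := by
    intro x k
    rw [ml_coord_move]
    by_cases h1 : k = i
    · subst h1; simp [hij]
    · by_cases h2 : k = j
      · subst h2; simp [h1]
      · simp [h1, h2, Equiv.swap_apply_of_ne_of_ne h1 h2]
  have himg : (fun x => x + (b.coord j - b.coord i) x • (b i - b j)) '' T = T := by
    ext y
    constructor
    · rintro ⟨x, hx, rfl⟩
      rw [hT, ml_mem] at hx ⊢
      intro k
      simp only [key]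
      exact hx _
    · intro hy
      refine ⟨y + (b.coord j - b.coord i) y • (b i - b j), ?_, ?_⟩
      · rw [hT, ml_mem] at hy ⊢
        intro k
        rw [key]
        exact hy _
      · apply b.ext_elem
        intro k
        simp only [key, Equiv.swap_apply_self]
  have h := ml_change μ (b.coord j - b.coord i) (b i - b j) (-2) (by
    rw [AffineMap.sub_linear, LinearMap.sub_apply, ml_coord_linear, ml_coord_linear]
    simp [hij, hij.symm]; norm_num) (by norm_num) T (ml_compact b).measurableSet
      (fun x => F (fun k => b.coord k x))
  rw [himg] at h
  rw [h]
  simp only [key]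
  norm_num

/-- The halving map. -/
lemma ml_half (μ : Measure E) [μ.IsAddHaarMeasure] (b : AffineBasis ι ℝ E) (i j : ι)
    (hij : i ≠ j) : ∃ U : Set E, IsCompact U ∧
      (∀ x, x ∈ U ↔ x ∈ convexHull ℝ (Set.range b) ∧ b.coord j x ≤ b.coord i x) ∧
      ∫ x in U, b.coord i x * b.coord j x ∂μ = 1 / 2 * ∫ x in convexHull ℝ (Set.range b),
        (b.coord i x + b.coord j x / 2) * (b.coord j x / 2) ∂μ := by
  set T := convexHull ℝ (Set.range b) with hT
  have hval : ∀ x, ((1 / 2 : ℝ) • b.coord j) x = b.coord j x / 2 := by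
    intro x
    rw [AffineMap.coe_smul, Pi.smul_apply, smul_eq_mul]
    ring
  have hcont : Continuous (fun x => x + ((1 / 2 : ℝ) • b.coord j) x • (b i - b j)) := by
    simp only [hval]
    have := ml_cont b j
    fun_prop
  refine ⟨(fun x => x + ((1 / 2 : ℝ) • b.coord j) x • (b i - b j)) '' T,
    (ml_compact b).image hcont, ?_, ?_⟩
  · intro y
    constructor
    · rintro ⟨x, hx, rfl⟩
      rw [hT, ml_mem] at hx
      simp only [hval]
      refine ⟨?_, ?_⟩
      · rw [hT, ml_mem]
        intro k
        rw [ml_coord_move]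
        have := hx k
        have := hx j
        by_cases h1 : k = i
        · subst h1; simp [hij]; linarith
        · by_cases h2 : k = j
          · subst h2; simp [h1]; linarith
          · simp [h1, h2, hx k]
      · rw [ml_coord_move, ml_coord_move]
        have := hx i
        have := hx j
        simp [hij, hij.symm]; linarith
    · rintro ⟨hy, hle⟩
      rw [hT, ml_mem] at hy
      refine ⟨y + (-b.coord j y) • (b i - b j), ?_, ?_⟩
      · rw [hT, ml_mem]
        intro k
        rw [ml_coord_move]
        have := hy k
        have := hy j
        by_cases h1 : k = i
        · subst h1; simp [hij]; linarith
        · by_cases h2 : k = j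
          · subst h2; simp [h1]; linarith
          · simp [h1, h2, hy k]
      · simp only [hval]
        rw [ml_coord_move, add_assoc, ← add_smul]
        simp [hij.symm]
  · rw [ml_change μ _ _ (-(1 / 2)) (by
      rw [AffineMap.smul_linear, LinearMap.smul_apply, ml_coord_linear]
      simp [hij.symm]) (by norm_num) T (ml_compact b).measurableSet]
    simp only [hval, ml_coord_move]
    congr 1
    · norm_num [abs_of_pos]
    · congr 1
      funext x
      simp [hij, hij.symm]
      left; ring

/-- Off-diagonal moments are at most half of the mean diagonal ones. -/
lemma ml_offdiag (μ : Measure E) [μ.IsAddHaarMeasure] (b : AffineBasis ι ℝ E) (i j : ι)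
    (hij : i ≠ j) :
    4 * ∫ x in convexHull ℝ (Set.range b), b.coord i x * b.coord j x ∂μ ≤
      (∫ x in convexHull ℝ (Set.range b), b.coord i x * b.coord i x ∂μ) +
      ∫ x in convexHull ℝ (Set.range b), b.coord j x * b.coord j x ∂μ := by
  obtain ⟨U, hU, hUm, hUi⟩ := ml_half μ b i j hij
  obtain ⟨V, hV, hVm, hVi⟩ := ml_half μ b j i hij.symm
  set T := convexHull ℝ (Set.range b) with hT
  have hc : Continuous fun x => b.coord i x * b.coord j x := (ml_cont b i).mul (ml_cont b j)
  have hI : ∀ k l, IntegrableOn (fun x => b.coord k x * b.coord l x) T μ := fun k l =>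
    ((ml_cont b k).mul (ml_cont b l)).continuousOn.integrableOn_compact (ml_compact b)
  have hTU : T = U ∪ (V \ U) := by
    ext x
    simp only [Set.mem_union, Set.mem_sdiff, hUm, hVm]
    have := le_total (b.coord i x) (b.coord j x)
    tauto
  have h1 : ∫ x in T, b.coord i x * b.coord j x ∂μ ≤
      (∫ x in U, b.coord i x * b.coord j x ∂μ) + ∫ x in V, b.coord j x * b.coord i x ∂μ := by
    conv_lhs => rw [hTU]
    rw [setIntegral_union Set.disjoint_sdiff_right
      (hV.measurableSet.diff hU.measurableSet) (hc.continuousOn.integrableOn_compact hU)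
      ((hc.continuousOn.integrableOn_compact hV).mono_set Set.sdiff_subset)]
    gcongr
    simp only [mul_comm (b.coord j _)]
    apply setIntegral_mono_set (hc.continuousOn.integrableOn_compact hV)
    · refine (ae_restrict_iff' hV.measurableSet).2 (Filter.Eventually.of_forall ?_)
      intro x hx
      have := (ml_mem b x).1 ((hVm x).1 hx).1
      exact mul_nonneg (this i) (this j)
    · exact Set.sdiff_subset.eventuallyLE
  have h2 : ∀ k l, ∫ x in T, (b.coord k x + b.coord l x / 2) * (b.coord l x / 2) ∂μ =
      1 / 2 * (∫ x in T, b.coord k x * b.coord l x ∂μ)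
      + 1 / 4 * ∫ x in T, b.coord l x * b.coord l x ∂μ := by
    intro k l
    rw [← integral_const_mul, ← integral_const_mul, ← integral_add]
    · congr 1; funext x; ring
    · exact (hI k l).const_mul _
    · exact (hI l l).const_mul _
  rw [hUi, hVi, h2, h2] at h1
  have h3 : ∫ x in T, b.coord j x * b.coord i x ∂μ = ∫ x in T, b.coord i x * b.coord j x ∂μ := by
    simp only [mul_comm]
  rw [h3] at h1
  linarith

lemma ml_affine (b : AffineBasis ι ℝ E) (v : E →ᵃ[ℝ] ℝ) (x : E) :
    v x = ∑ i, b.coord i x * v (b i) := by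
  have h := b.affineCombination_coord_eq_self x
  have h1 := b.sum_coord_apply_eq_one x
  conv_lhs => rw [← h]
  rw [Finset.map_affineCombination _ _ _ h1,
    Finset.affineCombination_eq_linear_combination _ _ _ h1]
  simp

/-- Main estimate for an affine basis. -/
lemma ml_main (μ : Measure E) [μ.IsAddHaarMeasure] (b : AffineBasis ι ℝ E)
    (d : ℕ) (hcard : Fintype.card ι = d + 1) (hd : 1 ≤ d) (v : E →ᵃ[ℝ] ℝ) :
    ((μ (convexHull ℝ (Set.range b))).toReal / ((d + 1) * (d + 2))) * ∑ i, (v (b i)) ^ 2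
      ≤ (∫ x in convexHull ℝ (Set.range b), (v x) ^ 2 ∂μ) ∧
    (∫ x in convexHull ℝ (Set.range b), (v x) ^ 2 ∂μ)
      ≤ ((μ (convexHull ℝ (Set.range b))).toReal / (d + 1)) * ∑ i, (v (b i)) ^ 2 := by
  have hoff := ml_offdiag μ b
  have hswap := ml_swap μ b
  have hmem := ml_mem b
  have hcomp := ml_compact b
  set T := convexHull ℝ (Set.range b) with hT
  have hI : ∀ k l, IntegrableOn (fun x => b.coord k x * b.coord l x) T μ := fun k l =>
    ((ml_cont b k).mul (ml_cont b l)).continuousOn.integrableOn_compact hcomp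
  have hI1 : ∀ k, IntegrableOn (fun x => b.coord k x) T μ := fun k =>
    (ml_cont b k).continuousOn.integrableOn_compact hcomp
  have hcardR : (Fintype.card ι : ℝ) = d + 1 := by rw [hcard]; push_cast; ring
  obtain ⟨i₀, j₀, h₀⟩ : ∃ i j : ι, i ≠ j :=
    Fintype.one_lt_card_iff.1 (by omega)
  -- first moments
  obtain ⟨L, hL⟩ : ∃ L, L = ∫ x in T, b.coord i₀ x ∂μ := ⟨_, rfl⟩
  have hL' : ∀ k, ∫ x in T, b.coord k x ∂μ = L := by
    intro k
    by_cases hk : k = i₀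
    · rw [hk, hL]
    · rw [hL, hswap k i₀ hk (fun w => w k)]
      simp
  have hLv : (d + 1) * L = (μ T).toReal := by
    have h1 : ∑ k, ∫ x in T, b.coord k x ∂μ = (μ T).toReal := by
      rw [← integral_finsetSum _ (fun k _ => hI1 k)]
      simp [b.sum_coord_apply_eq_one, Measure.real]
    simp only [hL', Finset.sum_const, Finset.card_univ, nsmul_eq_mul, hcardR] at h1
    exact h1
  -- second moments
  obtain ⟨M, hM⟩ : ∃ M : ι → ι → ℝ, ∀ k l, M k l = ∫ x in T, b.coord k x * b.coord l x ∂μ :=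
    ⟨_, fun _ _ => rfl⟩
  have hMs : ∀ k l, M k l = M l k := by intro k l; rw [hM, hM]; simp only [mul_comm]
  have hMsw : ∀ i j k l, i ≠ j → M k l = M (Equiv.swap i j k) (Equiv.swap i j l) := by
    intro i j k l hij
    rw [hM, hM, hswap i j hij (fun w => w k * w l)]
  have hMd : ∀ k, M k k = M i₀ i₀ := by
    intro k
    by_cases hk : k = i₀
    · rw [hk]
    · rw [hMsw k i₀ k k hk]; simp
  have hM1 : ∀ i k j, i ≠ j → k ≠ j → M i j = M k j := by
    intro i k j h1 h2
    by_cases hk : i = k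
    · rw [hk]
    · rw [hMsw i k i j hk, Equiv.swap_apply_left, Equiv.swap_apply_of_ne_of_ne h1.symm h2.symm]
  have hMo : ∀ k l, k ≠ l → M k l = M i₀ j₀ := by
    intro k l hkl
    by_cases h : i₀ = l
    · subst h
      rw [hM1 k j₀ i₀ hkl h₀.symm, hMs]
    · rw [hM1 k i₀ l hkl h, hMs, hM1 l j₀ i₀ (Ne.symm h) h₀.symm, hMs]
  have hAB : 2 * M i₀ j₀ ≤ M i₀ i₀ := by
    have := hoff i₀ j₀ h₀
    rw [← hM, ← hM, ← hM, hMd j₀] at this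
    linarith
  have hB : 0 ≤ M i₀ j₀ := by
    rw [hM]
    apply setIntegral_nonneg hcomp.measurableSet
    intro x hx
    have := (hmem x).1 hx
    exact mul_nonneg (this _) (this _)
  generalize hA' : M i₀ i₀ = A at *
  generalize hB' : M i₀ j₀ = B at *
  have hMe : ∀ k l, M k l = B + (if k = l then A - B else 0) := by
    intro k l
    by_cases h : k = l
    · subst h; rw [hMd]; simp
    · rw [hMo k l h]; simp [h]
  have hALB : A + d * B = L := by
    have h1 : ∑ k, M i₀ k = L := by
      simp only [hM]
      rw [← integral_finsetSum _ (fun k _ => hI i₀ k)]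
      simp only [← Finset.mul_sum, b.sum_coord_apply_eq_one, mul_one, hL]
    simp only [hMe, Finset.sum_add_distrib, Finset.sum_const, Finset.card_univ, nsmul_eq_mul,
      hcardR, Finset.sum_ite_eq, Finset.mem_univ, if_true] at h1
    linarith
  have hint : ∫ x in T, (v x) ^ 2 ∂μ = (A - B) * ∑ i, (v (b i)) ^ 2 + B * (∑ i, v (b i)) ^ 2 := by
    have h1 : ∀ x, (v x) ^ 2 = ∑ k, ∑ l, (v (b k) * v (b l)) * (b.coord k x * b.coord l x) := by
      intro x
      rw [ml_affine b v x, sq, Finset.sum_mul_sum]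
      refine Finset.sum_congr rfl fun k _ => Finset.sum_congr rfl fun l _ => by ring
    rw [show (fun x => (v x) ^ 2) = _ from funext h1]
    rw [integral_finsetSum _ (fun k _ => integrable_finsetSum _ fun l _ => (hI k l).const_mul _)]
    have h2 : ∀ k, ∫ x in T, ∑ l, (v (b k) * v (b l)) * (b.coord k x * b.coord l x) ∂μ
        = ∑ l, (v (b k) * v (b l)) * M k l := by
      intro k
      rw [integral_finsetSum _ (fun l _ => (hI k l).const_mul _)]
      simp only [integral_const_mul, hM]
    simp only [h2, hMe, mul_add, Finset.sum_add_distrib, mul_ite, mul_zero, Finset.sum_ite_eq,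
      Finset.mem_univ, if_true]
    rw [sq (∑ i, v (b i)), Finset.sum_mul_sum, Finset.mul_sum, Finset.mul_sum, add_comm]
    congr 1
    · exact Finset.sum_congr rfl fun k _ => by ring
    · refine Finset.sum_congr rfl fun k _ => ?_
      rw [Finset.mul_sum]
      exact Finset.sum_congr rfl fun l _ => by ring
  have hQ : 0 ≤ ∑ i, (v (b i)) ^ 2 := Finset.sum_nonneg fun _ _ => sq_nonneg _
  have hCS : (∑ i, v (b i)) ^ 2 ≤ (d + 1) * ∑ i, (v (b i)) ^ 2 := by
    have := sq_sum_le_card_mul_sum_sq (s := (Finset.univ : Finset ι)) (f := fun i => v (b i))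
    rwa [Finset.card_univ, hcardR] at this
  have hd0 : (0 : ℝ) ≤ d := Nat.cast_nonneg d
  rw [hint, ← hLv]
  have e1 : ((d : ℝ) + 1) * L / ((d + 1) * (d + 2)) = L / (d + 2) := by field_simp
  have e2 : ((d : ℝ) + 1) * L / (d + 1) = L := by field_simp
  rw [e1, e2]
  constructor
  · have h1 : L / (d + 2) ≤ A - B := by
      rw [div_le_iff₀ (by positivity), ← hALB]
      nlinarith
    have := mul_le_mul_of_nonneg_right h1 hQ
    have := mul_nonneg hB (sq_nonneg (∑ i, v (b i)))
    linarith
  · have := mul_le_mul_of_nonneg_left hCS hB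
    rw [← hALB]
    linarith

end MassLumping

/-- Element-level equivalence of the mass-lumped and `L²` norms for affine
functions: if `T` is the simplex spanned by affinely independent points
`p₀, …, p_d` in `ℝ^d` and `v` is affine, then
`(vol(T)/((d+1)(d+2))) Σᵢ v(pᵢ)² ≤ ∫_T v² ≤ (vol(T)/(d+1)) Σᵢ v(pᵢ)²`. -/
theorem simplex_mass_lumping_bounds
    {d : ℕ} (hd : 1 ≤ d) (p : Fin (d + 1) → EuclideanSpace ℝ (Fin d))
    (hp : AffineIndependent ℝ p)
    (v : EuclideanSpace ℝ (Fin d) →ᵃ[ℝ] ℝ) :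
    ((volume (convexHull ℝ (Set.range p))).toReal / ((d + 1) * (d + 2))) *
        ∑ i : Fin (d + 1), (v (p i)) ^ 2
      ≤ (∫ x in convexHull ℝ (Set.range p), (v x) ^ 2) ∧
    (∫ x in convexHull ℝ (Set.range p), (v x) ^ 2)
      ≤ ((volume (convexHull ℝ (Set.range p))).toReal / (d + 1)) *
        ∑ i : Fin (d + 1), (v (p i)) ^ 2 := by
  have hcard : Fintype.card (Fin (d + 1)) = Module.finrank ℝ (EuclideanSpace ℝ (Fin d)) + 1 := by
    simp
  exact ml_main volume
    (⟨p, hp, hp.affineSpan_eq_top_iff_card_eq_finrank_add_one.2 hcard⟩ :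
      AffineBasis (Fin (d + 1)) ℝ (EuclideanSpace ℝ (Fin d))) d (by simp) hd v
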